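/- (ℬ, Δ, ε*) is a graded, connected, cocommutative, coassociative coalgebra: (Δ ⊗ id) ∘ Δ = (id ⊗ Δ) ∘ Δ; the flip map of ℬ ⊗ ℬ fixes Δ(x) for every x ∈ ℬ; (ε* ⊗ id) ∘ Δ = id = (id ⊗ ε*) ∘ Δ (identifying ℂ ⊗ ℬ and ℬ ⊗ ℂ with ℬ); and Δ respects the grading of ℬ by ω: for every B-diagram G, each term G[I] ⊗ G[∁I] of Δ(G) satisfies ω(G[I]) + ω(G[∁I]) = ω(G). -/

import Mathlib

open scoped BigOperators

structure BD where
  lam : List ℕ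
  up : Finset ℕ
  dn : Finset ℕ
  ed : Finset (ℕ × ℕ)
deriving DecidableEq

namespace BD

/-- number of vertices -/
def nv (G : BD) : ℕ := G.lam.length

/-- number of half-edges -/
def omega (G : BD) : ℕ := G.lam.sum

/-- the vertex to which a half-edge belongs -/
def v (G : BD) (k : ℕ) : ℕ :=
  (List.range G.lam.length).countP (fun i => (G.lam.take i).sum < k)

def Valid (G : BD) : Prop :=
  (∀ x ∈ G.lam, 0 < x) ∧
  G.up ⊆ Finset.Icc 1 G.omega ∧
  G.dn ⊆ Finset.Icc 1 G.omega ∧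
  (∀ p ∈ G.ed, p.1 ∈ G.up ∧ p.2 ∈ G.dn ∧ G.v p.1 < G.v p.2) ∧
  (∀ p ∈ G.ed, ∀ q ∈ G.ed, p.1 = q.1 → p = q) ∧
  (∀ p ∈ G.ed, ∀ q ∈ G.ed, p.2 = q.2 → p = q)

def eps : BD := ⟨[], ∅, ∅, ∅⟩

theorem eps_valid : eps.Valid := by
  refine ⟨?_, ?_, ?_, ?_, ?_, ?_⟩ <;> simp [eps, Valid, omega]

def HfUp (G : BD) : Finset ℕ := G.up \ G.ed.image Prod.fst
def HfDn (G : BD) : Finset ℕ := G.dn \ G.ed.image Prod.snd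
def hfUp (G : BD) : ℕ := G.HfUp.card
def hfDn (G : BD) : ℕ := G.HfDn.card
def hc (G : BD) : ℕ :=
  (G.omega - G.ed.card - G.hfUp) + (G.omega - G.ed.card - G.hfDn)

/-- composition of `G'` over `G` along a matching `s` -/
def comp (G G' : BD) (s : Finset (ℕ × ℕ)) : BD where
  lam := G.lam ++ G'.lam
  up := G.up ∪ G'.up.image (· + G.omega)
  dn := G.dn ∪ G'.dn.image (· + G.omega)
  ed := G.ed ∪ s.image (fun p => (p.1, p.2 + G.omega)) ∪
        G'.ed.image (fun p => (p.1 + G.omega, p.2 + G.omega))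

/-- `s` encodes a strictly increasing sequence `a₁ < ⋯ < a_k` of elements of `H_f↑(G)`
matched with pairwise distinct elements `b₁,…,b_k` of `H_f↓(G')`. -/
def Matching (G G' : BD) (s : Finset (ℕ × ℕ)) : Prop :=
  (∀ p ∈ s, p.1 ∈ G.HfUp ∧ p.2 ∈ G'.HfDn) ∧
  (∀ p ∈ s, ∀ q ∈ s, p.1 = q.1 → p = q) ∧
  (∀ p ∈ s, ∀ q ∈ s, p.2 = q.2 → p = q)

open scoped Classical in
noncomputable def matchings (G G' : BD) : Finset (Finset (ℕ × ℕ)) :=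
  (G.HfUp ×ˢ G'.HfDn).powerset.filter (fun s => Matching G G' s)

/-- juxtaposition -/
def juxt (G G' : BD) : BD := comp G G' ∅

def Indiv (G : BD) : Prop :=
  ∀ G₁ G₂ : BD, G₁.Valid → G₂.Valid → G = juxt G₁ G₂ → G₁ = G ∨ G₂ = G

/-- half-edges attached to the vertices in `I` -/
def HI (G : BD) (I : Finset ℕ) : Finset ℕ :=
  (Finset.Icc 1 G.omega).filter (fun k => G.v k ∈ I)

/-- the increasing relabelling bijection -/
def phi (G : BD) (I : Finset ℕ) (k : ℕ) : ℕ := ((G.HI I).filter (· ≤ k)).card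

/-- sub-B-diagram on the set of vertices `I` -/
def sub (G : BD) (I : Finset ℕ) : BD where
  lam := ((List.range G.lam.length).filter (fun i => i + 1 ∈ I)).map (fun i => G.lam.getD i 0)
  up := (G.up ∩ G.HI I).image (G.phi I)
  dn := (G.dn ∩ G.HI I).image (G.phi I)
  ed := (G.ed.filter (fun p => G.v p.1 ∈ I ∧ G.v p.2 ∈ I)).image
          (fun p => (G.phi I p.1, G.phi I p.2))

def Isolated (G : BD) (I : Finset ℕ) : Prop :=
  ∀ p ∈ G.ed, (G.v p.1 ∈ I ↔ G.v p.2 ∈ I)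

def Connected (G : BD) : Prop :=
  ∀ i j : ℕ, 1 ≤ i → i < j → j ≤ G.nv →
    ∃ (k : ℕ) (c : Fin (k + 1) → ℕ × ℕ),
      (∀ ℓ, c ℓ ∈ G.ed) ∧
      (i = G.v (c 0).1 ∨ i = G.v (c 0).2) ∧
      (j = G.v (c (Fin.last k)).1 ∨ j = G.v (c (Fin.last k)).2) ∧
      ∀ ℓ : Fin k,
        G.v (c ℓ.castSucc).1 = G.v (c ℓ.succ).1 ∨ G.v (c ℓ.castSucc).1 = G.v (c ℓ.succ).2 ∨
        G.v (c ℓ.castSucc).2 = G.v (c ℓ.succ).1 ∨ G.v (c ℓ.castSucc).2 = G.v (c ℓ.succ).2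

def IsConnComp (G : BD) (I : Finset ℕ) : Prop :=
  I ⊆ Finset.Icc 1 G.nv ∧ I.Nonempty ∧ (G.sub I).Connected ∧
  ∀ J : Finset ℕ, I ⊆ J → J ⊆ Finset.Icc 1 G.nv → (G.sub J).Connected → J = I

end BD

open scoped TensorProduct

/-- B-diagrams -/
abbrev BDiagram := {G : BD // G.Valid}

/-- the free `ℂ`-vector space on the set of B-diagrams -/
abbrev BSpace := BDiagram →₀ ℂ

open scoped Classical in
noncomputable def mkB (G : BD) : BSpace :=
  if h : G.Valid then Finsupp.single ⟨G, h⟩ 1 else 0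

noncomputable def unitB : BSpace := Finsupp.single ⟨BD.eps, BD.eps_valid⟩ 1

noncomputable def liftB {V : Type*} [AddCommMonoid V] [Module ℂ V] (f : BDiagram → V) :
    BSpace →ₗ[ℂ] V :=
  Finsupp.lsum ℂ fun A => LinearMap.toSpanSingleton ℂ V (f A)

noncomputable def mulfun (A B : BDiagram) : BSpace :=
  ∑ s ∈ BD.matchings A.1 B.1, mkB (BD.comp A.1 B.1 s)

/-- the product ⋆ of the algebra of B-diagrams, as a bilinear map -/
noncomputable def starB : BSpace →ₗ[ℂ] BSpace →ₗ[ℂ] BSpace :=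
  liftB fun A => liftB fun B => mulfun A B

open scoped Classical in
/-- the coproduct evaluated on a B-diagram -/
noncomputable def dfun (A : BDiagram) : BSpace ⊗[ℂ] BSpace :=
  ∑ I ∈ (Finset.Icc 1 A.1.nv).powerset.filter (fun I => A.1.Isolated I),
    mkB (A.1.sub I) ⊗ₜ[ℂ] mkB (A.1.sub (Finset.Icc 1 A.1.nv \ I))

/-- the coproduct Δ of ℬ -/
noncomputable def deltaL : BSpace →ₗ[ℂ] BSpace ⊗[ℂ] BSpace := liftB dfun

/-- the counit of ℬ -/
noncomputable def counitB : BSpace →ₗ[ℂ] ℂ :=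
  liftB fun A => if A.1 = BD.eps then (1 : ℂ) else 0

namespace BD

def rk (X : Finset ℕ) (k : ℕ) : ℕ := (X.filter (· ≤ k)).card

theorem rk_mono (X : Finset ℕ) {a b : ℕ} (h : a ≤ b) : rk X a ≤ rk X b := by
  apply Finset.card_le_card
  intro x
  simp only [Finset.mem_filter]
  exact fun ⟨h1, h2⟩ => ⟨h1, h2.trans h⟩

theorem rk_lt (X : Finset ℕ) {a b : ℕ} (hb : b ∈ X) : rk X a < rk X b ↔ a < b := by
  constructor
  · intro h
    by_contra h'
    exact absurd (rk_mono X (not_lt.1 h')) (not_le.2 h)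
  · intro h
    apply Finset.card_lt_card
    refine ⟨?_, ?_⟩
    · intro x
      simp only [Finset.mem_filter]
      exact fun ⟨h1, h2⟩ => ⟨h1, h2.trans h.le⟩
    · intro hh
      have := hh (Finset.mem_filter.2 ⟨hb, le_rfl⟩)
      simp only [Finset.mem_filter] at this
      omega

theorem rk_le (X : Finset ℕ) {a b : ℕ} (ha : a ∈ X) : rk X a ≤ rk X b ↔ a ≤ b := by
  rw [← not_lt, rk_lt X ha, not_lt]

theorem rk_inj (X : Finset ℕ) {a b : ℕ} (ha : a ∈ X) (hb : b ∈ X) :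
    rk X a = rk X b ↔ a = b := by
  constructor
  · intro h
    exact le_antisymm ((rk_le X ha).1 h.le) ((rk_le X hb).1 h.ge)
  · rintro rfl; rfl

theorem rk_injOn (X : Finset ℕ) : Set.InjOn (rk X) X := fun _ ha _ hb h => (rk_inj X ha hb).1 h

theorem rk_le_card (X : Finset ℕ) (a : ℕ) : rk X a ≤ X.card :=
  Finset.card_le_card (Finset.filter_subset _ _)

theorem rk_pos (X : Finset ℕ) {a : ℕ} (ha : a ∈ X) : 1 ≤ rk X a :=
  Finset.card_pos.2 ⟨a, Finset.mem_filter.2 ⟨ha, le_rfl⟩⟩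

theorem rk_image (X : Finset ℕ) : X.image (rk X) = Finset.Icc 1 X.card := by
  apply Finset.eq_of_subset_of_card_le
  · intro x hx
    obtain ⟨a, ha, rfl⟩ := Finset.mem_image.1 hx
    exact Finset.mem_Icc.2 ⟨rk_pos X ha, rk_le_card X a⟩
  · rw [Finset.card_image_of_injOn (rk_injOn X)]; simp

theorem rk_rk (X Y : Finset ℕ) (h : Y ⊆ X) {k : ℕ} :
    rk (Y.image (rk X)) (rk X k) = rk Y k := by
  unfold rk
  rw [Finset.filter_image, Finset.card_image_of_injOn]
  · congr 1
    apply Finset.filter_congr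
    intro x hx
    exact rk_le X (h hx)
  · intro a ha b hb hab
    simp only [Finset.coe_filter, Set.mem_ofPred_eq] at ha hb
    exact (rk_inj X (h ha.1) (h hb.1)).1 hab

theorem rk_succ (X : Finset ℕ) (k : ℕ) :
    rk X (k+1) = rk X k + if k + 1 ∈ X then 1 else 0 := by
  unfold rk
  split_ifs with h
  · rw [← Finset.card_insert_of_notMem (a := k+1) (s := X.filter (· ≤ k)) (by simp)]
    congr 1; ext x; simp only [Finset.mem_filter, Finset.mem_insert]
    constructor
    · rintro ⟨h1, h2⟩
      by_cases hx : x = k + 1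
      · exact Or.inl hx
      · exact Or.inr ⟨h1, by omega⟩
    · rintro (rfl | ⟨h1, h2⟩)
      · exact ⟨h, le_rfl⟩
      · exact ⟨h1, by omega⟩
  · rw [add_zero]
    congr 1; ext x; simp only [Finset.mem_filter]
    constructor
    · rintro ⟨h1, h2⟩
      refine ⟨h1, ?_⟩
      have : x ≠ k + 1 := fun hh => h (hh ▸ h1)
      omega
    · rintro ⟨h1, h2⟩
      exact ⟨h1, by omega⟩

def S (l : List ℕ) (i : ℕ) : ℕ := (l.take i).sum

theorem S_mono (l : List ℕ) : Monotone (S l) := by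
  apply monotone_nat_of_le_succ
  intro i
  unfold S
  rw [List.take_add_one, List.sum_append]
  omega

theorem S_succ (l : List ℕ) (i : ℕ) : S l (i+1) = S l i + l.getD i 0 := by
  unfold S
  rw [List.take_add_one, List.sum_append, List.getD_eq_getElem?_getD]
  cases l[i]? <;> simp

theorem countP_range (P : ℕ → Bool) (hP : ∀ i j, i ≤ j → P j = true → P i = true) (n i : ℕ)
    (hi : i < n) : i < (List.range n).countP P ↔ P i = true := by
  induction n with
  | zero => omega
  | succ n ih =>
    rw [List.range_succ, List.countP_append, List.countP_singleton]
    by_cases hn : P n = true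
    · have : (List.range n).countP P = n := by
        have h2 : (List.range n).countP P = (List.range n).length := by
          rw [List.countP_eq_length]
          intro a ha
          exact hP a n (List.mem_range.1 ha).le hn
        simpa using h2
      simp only [this, hn, if_true]
      exact ⟨fun _ => hP i n (by omega) hn, fun _ => hi⟩
    · simp only [hn]
      rcases Nat.lt_succ_iff_lt_or_eq.1 hi with h | rfl
      · simpa using ih h
      · have : (List.range i).countP P ≤ (List.range i).length := List.countP_le_length
        simp only [List.length_range] at this
        simp [hn]
        simpa using this

theorem lt_v (G : BD) (k i : ℕ) (hi : i < G.lam.length) : i < G.v k ↔ S G.lam i < k := by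
  unfold v
  rw [countP_range _ _ _ _ hi]
  · simp [S]
  · intro a b hab hb
    simp only [decide_eq_true_eq] at hb ⊢
    exact lt_of_le_of_lt (S_mono G.lam hab) hb

theorem v_le (G : BD) (k : ℕ) : G.v k ≤ G.nv := by
  unfold v nv
  have := List.countP_le_length (p := fun i => decide ((G.lam.take i).sum < k)) (l := List.range G.lam.length)
  simpa using this

theorem omega_eq (G : BD) : G.omega = S G.lam G.lam.length := by
  simp [omega, S]

theorem v_mem (G : BD) {k : ℕ} (hk : k ∈ Finset.Icc 1 G.omega) : G.v k ∈ Finset.Icc 1 G.nv := by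
  rw [Finset.mem_Icc] at *
  refine ⟨?_, v_le G k⟩
  have : 0 < G.lam.length := by
    by_contra h
    have : G.lam = [] := by simpa using h
    simp [omega, this] at hk
    omega
  rw [Nat.succ_le_iff, lt_v G k 0 this]
  simp [S]; omega

theorem v_eq (G : BD) {k i : ℕ} (hi : i < G.lam.length) (h1 : S G.lam i < k)
    (h2 : k ≤ S G.lam (i+1)) : G.v k = i + 1 := by
  have h3 := (lt_v G k i hi).2 h1
  by_cases h : i + 1 < G.lam.length
  · have := (lt_v G k (i+1) h)
    omega
  · have := v_le G k
    unfold nv at this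
    omega

theorem phi_eq (G : BD) (I : Finset ℕ) (k : ℕ) : G.phi I k = rk (G.HI I) k := rfl

def Lf (I : Finset ℕ) (n : ℕ) : List ℕ := (List.range n).filter (fun i => i + 1 ∈ I)

theorem Lf_succ (I : Finset ℕ) (n : ℕ) :
    Lf I (n+1) = if n + 1 ∈ I then Lf I n ++ [n] else Lf I n := by
  unfold Lf
  rw [List.range_succ, List.filter_append]
  split_ifs with h <;> simp [h]

theorem sub_lam (G : BD) (I : Finset ℕ) :
    (G.sub I).lam = (Lf I G.lam.length).map (fun i => G.lam.getD i 0) := rfl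

theorem rk_zero (I : Finset ℕ) (hI : 0 ∉ I) : rk I 0 = 0 := by
  unfold rk
  rw [Finset.card_eq_zero, Finset.filter_eq_empty_iff]
  intro x hx h
  have : x = 0 := by omega
  exact hI (this ▸ hx)

theorem Lf_length (I : Finset ℕ) (hI : 0 ∉ I) (n : ℕ) : (Lf I n).length = rk I n := by
  induction n with
  | zero => simp [Lf, rk_zero I hI]
  | succ n ih =>
    rw [Lf_succ, rk_succ]
    split_ifs <;> simp [ih]

theorem Lf_prefix (I : Finset ℕ) {i n : ℕ} (h : i ≤ n) : Lf I i <+: Lf I n := by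
  induction n, h using Nat.le_induction with
  | base => exact List.prefix_rfl
  | succ n hn ih =>
    rw [Lf_succ]
    split_ifs
    · exact ih.trans (List.prefix_append _ _)
    · exact ih

theorem Lf_take (I : Finset ℕ) (hI : 0 ∉ I) {i n : ℕ} (h : i ≤ n) :
    (Lf I n).take (rk I i) = Lf I i := by
  rw [← Lf_length I hI i]
  exact (List.prefix_iff_eq_take.1 (Lf_prefix I h)).symm

theorem zero_notMem_HI (G : BD) (I : Finset ℕ) : 0 ∉ G.HI I := by
  simp [HI]

theorem phi_S (G : BD) (I : Finset ℕ) {i : ℕ} (hi : i ≤ G.lam.length) :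
    rk (G.HI I) (S G.lam i) = ((Lf I i).map (fun i => G.lam.getD i 0)).sum := by
  induction i with
  | zero => simp [S, Lf, rk_zero _ (zero_notMem_HI G I)]
  | succ i ih =>
    have ih := ih (by omega)
    have key : (G.HI I).filter (· ≤ S G.lam (i+1)) =
      (G.HI I).filter (· ≤ S G.lam i) ∪
        (if i + 1 ∈ I then Finset.Ioc (S G.lam i) (S G.lam (i+1)) else ∅) := by
      have hle := S_mono G.lam (Nat.le_succ i)
      have hw : S G.lam (i+1) ≤ G.omega := by rw [omega_eq]; exact S_mono G.lam hi
      have hv := fun k => v_eq G (k := k) (i := i) (by omega)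
      ext k
      have hv := hv k
      simp only [Finset.mem_filter, Finset.mem_union, HI, Finset.mem_Icc]
      simp only [Nat.succ_eq_add_one] at hle
      by_cases hk : S G.lam i < k ∧ k ≤ S G.lam (i+1)
      · have := hv hk.1 hk.2
        rw [this]
        split_ifs with hI
        · simp [hI]; omega
        · simp [hI]
      · split_ifs with hI
        · simp only [Finset.mem_Ioc, hk, or_false]
          constructor <;> (rintro ⟨h1, h2⟩; refine ⟨h1, by omega⟩)
        · simp only [Finset.notMem_empty, or_false]
          constructor <;> (rintro ⟨h1, h2⟩; refine ⟨h1, by omega⟩)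
    unfold rk at ih ⊢
    rw [key, Finset.card_union_of_disjoint, ih, Lf_succ]
    · split_ifs with hI
      · simp [S_succ]
      · simp
    · rw [Finset.disjoint_left]
      intro a ha
      simp only [Finset.mem_filter] at ha
      split_ifs
      · simp; omega
      · simp

theorem sub_S (G : BD) (I : Finset ℕ) (hI : 0 ∉ I) {i : ℕ} (hi : i ≤ G.lam.length) :
    S (G.sub I).lam (rk I i) = rk (G.HI I) (S G.lam i) := by
  rw [phi_S G I hi, sub_lam]
  unfold S
  rw [← List.map_take, Lf_take I hI hi]

theorem rk_top (X : Finset ℕ) {n : ℕ} (h : ∀ x ∈ X, x ≤ n) : rk X n = X.card := by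
  unfold rk
  congr 1
  exact Finset.filter_true_of_mem h

theorem sub_nv (G : BD) (I : Finset ℕ) (hI : I ⊆ Finset.Icc 1 G.nv) : (G.sub I).nv = I.card := by
  have h0 : 0 ∉ I := fun h => by simpa using hI h
  unfold nv
  rw [sub_lam, List.length_map, Lf_length I h0, rk_top]
  intro x hx
  exact (Finset.mem_Icc.1 (hI hx)).2

theorem sub_omega (G : BD) (I : Finset ℕ) : (G.sub I).omega = (G.HI I).card := by
  unfold omega
  rw [sub_lam, ← phi_S G I le_rfl, ← omega_eq, rk_top]
  intro x hx
  simp [HI] at hx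
  exact hx.1.2

theorem sub_v (G : BD) (I : Finset ℕ) (hI : I ⊆ Finset.Icc 1 G.nv) {k : ℕ} (hk : k ∈ G.HI I) :
    (G.sub I).v (rk (G.HI I) k) = rk I (G.v k) := by
  have h0 : 0 ∉ I := fun h => by simpa using hI h
  have hn := sub_nv G I hI
  have hvk : G.v k ∈ I := by simp [HI] at hk; exact hk.2
  have key : ∀ j < I.card, j < (G.sub I).v (rk (G.HI I) k) ↔ j < rk I (G.v k) := by
    intro j hj
    rw [lt_v _ _ _ (by unfold nv at hn; omega)]
    have : j + 1 ∈ I.image (rk I) := by rw [rk_image]; simp; omega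
    obtain ⟨i', hi', hij⟩ := Finset.mem_image.1 this
    have h1 := Finset.mem_Icc.1 (hI hi')
    obtain ⟨i, rfl⟩ : ∃ i, i' = i + 1 := ⟨i' - 1, by omega⟩
    have hr : rk I i = j := by
      have := rk_succ I i
      rw [if_pos hi'] at this; omega
    have hin : i < G.lam.length := by unfold nv at h1; omega
    rw [← hr, sub_S G I h0 hin.le, rk_lt _ hk, rk_lt _ hvk, lt_v G k i hin]
  have h1 := v_le (G.sub I) (rk (G.HI I) k)
  have h2 := rk_le_card I (G.v k)
  rw [hn] at h1
  apply le_antisymm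
  · by_contra h
    have := (key (rk I (G.v k)) (by omega)).1 (by omega)
    omega
  · by_contra h
    have := (key ((G.sub I).v (rk (G.HI I) k)) (by omega)).2 (by omega)
    omega

theorem HI_iff (G : BD) (I : Finset ℕ) (k : ℕ) :
    k ∈ G.HI I ↔ k ∈ Finset.Icc 1 G.omega ∧ G.v k ∈ I := by simp [HI]

def pull (I J : Finset ℕ) : Finset ℕ := I.filter (fun i => rk I i ∈ J)

theorem sub_HI (G : BD) (I J : Finset ℕ) (hI : I ⊆ Finset.Icc 1 G.nv) :
    (G.sub I).HI J = (G.HI (pull I J)).image (rk (G.HI I)) := by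
  ext x
  rw [HI_iff, sub_omega, ← rk_image]
  simp only [Finset.mem_image]
  constructor
  · rintro ⟨⟨k, hk, rfl⟩, h2⟩
    rw [sub_v G I hI hk] at h2
    refine ⟨k, ?_, rfl⟩
    rw [HI_iff] at hk ⊢
    exact ⟨hk.1, Finset.mem_filter.2 ⟨hk.2, h2⟩⟩
  · rintro ⟨k, hk, rfl⟩
    rw [HI_iff] at hk
    have h := Finset.mem_filter.1 hk.2
    have hk' : k ∈ G.HI I := (HI_iff _ _ _).2 ⟨hk.1, h.1⟩
    refine ⟨⟨k, hk', rfl⟩, ?_⟩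
    rw [sub_v G I hI hk']
    exact h.2

theorem pull_subset (I J : Finset ℕ) : pull I J ⊆ I := Finset.filter_subset _ _

theorem HI_mono (G : BD) {I J : Finset ℕ} (h : I ⊆ J) : G.HI I ⊆ G.HI J := by
  intro k; rw [HI_iff, HI_iff]; exact fun ⟨a, b⟩ => ⟨a, h b⟩

theorem sub_phi (G : BD) (I J : Finset ℕ) (hI : I ⊆ Finset.Icc 1 G.nv) (k : ℕ) :
    (G.sub I).phi J (G.phi I k) = G.phi (pull I J) k := by
  rw [phi_eq, phi_eq, phi_eq, sub_HI G I J hI, rk_rk _ _ (HI_mono G (pull_subset I J))]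

theorem Lf_Lf (f : ℕ → ℕ) (I J : Finset ℕ) (hI : 0 ∉ I) (n : ℕ) :
    (Lf J (Lf I n).length).map (fun i => ((Lf I n).map f).getD i 0) =
      (Lf (pull I J) n).map f := by
  induction n with
  | zero => simp [Lf]
  | succ n ih =>
    rw [Lf_succ I, Lf_succ (pull I J)]
    have hlen := Lf_length I hI n
    have hrk := rk_succ I n
    by_cases h : n + 1 ∈ I
    · rw [if_pos h] at hrk
      rw [if_pos h, List.length_append, List.length_singleton, Lf_succ J]
      have h1 : (Lf J (Lf I n).length).map (fun i => ((Lf I n ++ [n]).map f).getD i 0) =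
          (Lf (pull I J) n).map f := by
        rw [← ih]
        apply List.map_congr_left
        intro a ha
        have : a < (Lf I n).length := by
          have := List.mem_of_mem_filter ha
          simpa using this
        rw [List.map_append, List.getD_append]
        simpa using this
      have h2 : n + 1 ∈ pull I J ↔ (Lf I n).length + 1 ∈ J := by
        rw [pull, Finset.mem_filter, hrk, hlen]
        simp [h]
      by_cases h3 : n + 1 ∈ pull I J
      · rw [if_pos h3, if_pos (h2.1 h3), List.map_append, h1, List.map_append]
        congr 1
        simp
      · rw [if_neg h3, if_neg (fun hh => h3 (h2.2 hh)), h1]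
    · rw [if_neg h, if_neg (fun hh => h (pull_subset _ _ hh)), ih]

theorem mem_sub_ed (G : BD) (I : Finset ℕ) (x y : ℕ) : (x, y) ∈ (G.sub I).ed ↔
    ∃ a b, ((a, b) ∈ G.ed ∧ G.v a ∈ I ∧ G.v b ∈ I) ∧ G.phi I a = x ∧ G.phi I b = y := by
  simp only [sub, Finset.mem_image, Finset.mem_filter, Prod.mk.injEq, Prod.exists]

theorem sub_sub (G : BD) (I J : Finset ℕ) (hG : G.Valid) (hI : I ⊆ Finset.Icc 1 G.nv) :
    (G.sub I).sub J = G.sub (pull I J) := by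
  have h0 : 0 ∉ I := fun h => by simpa using hI h
  have hset : ∀ X : Finset ℕ, X ⊆ Finset.Icc 1 G.omega →
      (((X ∩ G.HI I).image (G.phi I)) ∩ (G.sub I).HI J).image ((G.sub I).phi J) =
      (X ∩ G.HI (pull I J)).image (G.phi (pull I J)) := by
    intro X _
    have : ((X ∩ G.HI I).image (G.phi I)) ∩ (G.sub I).HI J =
        (X ∩ G.HI (pull I J)).image (G.phi I) := by
      rw [sub_HI G I J hI]
      ext x
      simp only [Finset.mem_inter, Finset.mem_image]
      constructor
      · rintro ⟨⟨a, ⟨ha1, ha2⟩, rfl⟩, ⟨b, hb, hab⟩⟩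
        rw [phi_eq, rk_inj _ (HI_mono G (pull_subset I J) hb) ha2] at hab
        subst hab
        exact ⟨b, ⟨ha1, hb⟩, rfl⟩
      · rintro ⟨a, ⟨ha1, ha2⟩, rfl⟩
        exact ⟨⟨a, ⟨ha1, HI_mono G (pull_subset I J) ha2⟩, rfl⟩, ⟨a, ha2, rfl⟩⟩
    rw [this, Finset.image_image]
    apply Finset.image_congr
    intro k _
    exact sub_phi G I J hI k
  have hlam : ((G.sub I).sub J).lam = (G.sub (pull I J)).lam := by
    rw [sub_lam, sub_lam, sub_lam, List.length_map, Lf_Lf _ I J h0]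
  have hed : ((G.sub I).sub J).ed = (G.sub (pull I J)).ed := by
    ext ⟨x, y⟩
    simp only [mem_sub_ed]
    have hmem : ∀ a b, (a, b) ∈ G.ed → G.v a ∈ I ∧ G.v b ∈ I →
        ((G.sub I).v (G.phi I a) = rk I (G.v a) ∧ (G.sub I).v (G.phi I b) = rk I (G.v b)) := by
      intro a b hab ⟨h1, h2⟩
      have := hG.2.2.2.1 _ hab
      exact ⟨sub_v G I hI ((HI_iff _ _ _).2 ⟨hG.2.1 this.1, h1⟩),
        sub_v G I hI ((HI_iff _ _ _).2 ⟨hG.2.2.1 this.2.1, h2⟩)⟩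
    constructor
    · rintro ⟨_, _, ⟨⟨a, b, ⟨hab, hI'⟩, rfl, rfl⟩, h1, h2⟩, rfl, rfl⟩
      have h := hmem a b hab hI'
      rw [h.1] at h1
      rw [h.2] at h2
      exact ⟨a, b, ⟨hab, Finset.mem_filter.2 ⟨hI'.1, h1⟩, Finset.mem_filter.2 ⟨hI'.2, h2⟩⟩,
        (sub_phi G I J hI a).symm, (sub_phi G I J hI b).symm⟩
    · rintro ⟨a, b, ⟨hab, h1, h2⟩, rfl, rfl⟩
      have h1 := Finset.mem_filter.1 h1
      have h2 := Finset.mem_filter.1 h2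
      have h := hmem a b hab ⟨h1.1, h2.1⟩
      refine ⟨_, _, ⟨⟨a, b, ⟨hab, h1.1, h2.1⟩, rfl, rfl⟩, ?_, ?_⟩, sub_phi G I J hI a,
        sub_phi G I J hI b⟩
      · rw [h.1]; exact h1.2
      · rw [h.2]; exact h2.2
  have hup : ((G.sub I).sub J).up = (G.sub (pull I J)).up := hset _ hG.2.1
  have hdn : ((G.sub I).sub J).dn = (G.sub (pull I J)).dn := hset _ hG.2.2.1
  generalize (G.sub I).sub J = A at *
  generalize G.sub (pull I J) = B at *
  cases A; cases B; simp_all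

theorem sub_valid (G : BD) (I : Finset ℕ) (hG : G.Valid) (hI : I ⊆ Finset.Icc 1 G.nv) :
    (G.sub I).Valid := by
  have hset : ∀ X : Finset ℕ, (X ∩ G.HI I).image (G.phi I) ⊆ Finset.Icc 1 (G.sub I).omega := by
    intro X
    rw [sub_omega, ← rk_image]
    exact Finset.image_subset_image Finset.inter_subset_right
  have hed : ∀ p ∈ (G.sub I).ed, ∃ q ∈ G.ed, q.1 ∈ G.HI I ∧ q.2 ∈ G.HI I ∧
      p = (rk (G.HI I) q.1, rk (G.HI I) q.2) := by
    intro p hp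
    simp only [sub, Finset.mem_image, Finset.mem_filter] at hp
    obtain ⟨q, ⟨hq, h1, h2⟩, rfl⟩ := hp
    have := hG.2.2.2.1 _ hq
    exact ⟨q, hq, (HI_iff _ _ _).2 ⟨hG.2.1 this.1, h1⟩, (HI_iff _ _ _).2 ⟨hG.2.2.1 this.2.1, h2⟩,
      rfl⟩
  refine ⟨?_, hset _, hset _, ?_, ?_, ?_⟩
  · intro x hx
    rw [sub_lam, List.mem_map] at hx
    obtain ⟨i, hi, rfl⟩ := hx
    have : i < G.lam.length := by
      have := List.mem_of_mem_filter hi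
      simpa using this
    rw [List.getD_eq_getElem _ _ this]
    exact hG.1 _ (List.getElem_mem _)
  · intro p hp
    obtain ⟨q, hq, h1, h2, rfl⟩ := hed p hp
    have := hG.2.2.2.1 _ hq
    refine ⟨Finset.mem_image.2 ⟨q.1, Finset.mem_inter.2 ⟨this.1, h1⟩, rfl⟩,
      Finset.mem_image.2 ⟨q.2, Finset.mem_inter.2 ⟨this.2.1, h2⟩, rfl⟩, ?_⟩
    simp only
    rw [sub_v G I hI h1, sub_v G I hI h2, rk_lt _ ((HI_iff _ _ _).1 h2).2]
    exact this.2.2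
  · intro p hp q hq h
    obtain ⟨p, hp', h1, h2, rfl⟩ := hed p hp
    obtain ⟨q, hq', h3, h4, rfl⟩ := hed q hq
    simp only [rk_inj _ h1 h3] at h
    rw [hG.2.2.2.2.1 p hp' q hq' h]
  · intro p hp q hq h
    obtain ⟨p, hp', h1, h2, rfl⟩ := hed p hp
    obtain ⟨q, hq', h3, h4, rfl⟩ := hed q hq
    simp only [rk_inj _ h2 h4] at h
    rw [hG.2.2.2.2.2 p hp' q hq' h]

theorem sub_isolated (G : BD) (I J : Finset ℕ) (hG : G.Valid) (hI : I ⊆ Finset.Icc 1 G.nv)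
    (hIs : G.Isolated I) : (G.sub I).Isolated J ↔ G.Isolated (pull I J) := by
  have hmem : ∀ q ∈ G.ed, G.v q.1 ∈ I ∧ G.v q.2 ∈ I →
        ((G.sub I).v (G.phi I q.1) = rk I (G.v q.1) ∧
          (G.sub I).v (G.phi I q.2) = rk I (G.v q.2)) := by
      intro q hab ⟨h1, h2⟩
      have := hG.2.2.2.1 _ hab
      exact ⟨sub_v G I hI ((HI_iff _ _ _).2 ⟨hG.2.1 this.1, h1⟩),
        sub_v G I hI ((HI_iff _ _ _).2 ⟨hG.2.2.1 this.2.1, h2⟩)⟩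
  constructor
  · intro h p hp
    have h2 := hIs p hp
    by_cases h3 : G.v p.1 ∈ I
    · have h4 := h2.1 h3
      have h5 := h (G.phi I p.1, G.phi I p.2) (Finset.mem_image.2 ⟨p, Finset.mem_filter.2
        ⟨hp, h3, h4⟩, rfl⟩)
      have h6 := hmem p hp ⟨h3, h4⟩
      simp only [h6] at h5
      simp [pull, h3, h4, h5]
    · have h4 : G.v p.2 ∉ I := fun hh => h3 (h2.2 hh)
      simp [pull, h3, h4]
  · intro h p hp
    simp only [sub, Finset.mem_image, Finset.mem_filter] at hp
    obtain ⟨q, ⟨hq, h1, h2⟩, rfl⟩ := hp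
    have h6 := hmem q hq ⟨h1, h2⟩
    have := h q hq
    simp only [h6]
    simpa [pull, h1, h2] using this

theorem sub_full (G : BD) (hG : G.Valid) : G.sub (Finset.Icc 1 G.nv) = G := by
  have hHI : G.HI (Finset.Icc 1 G.nv) = Finset.Icc 1 G.omega := by
    ext k
    rw [HI_iff]
    exact ⟨fun h => h.1, fun h => ⟨h, v_mem G h⟩⟩
  have hphi : ∀ k ∈ Finset.Icc 1 G.omega, G.phi (Finset.Icc 1 G.nv) k = k := by
    intro k hk
    rw [phi_eq, hHI, rk]
    have : (Finset.Icc 1 G.omega).filter (· ≤ k) = Finset.Icc 1 k := by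
      ext x
      simp only [Finset.mem_filter, Finset.mem_Icc] at *
      omega
    rw [this]; simp
  have hset : ∀ X ⊆ Finset.Icc 1 G.omega,
      (X ∩ G.HI (Finset.Icc 1 G.nv)).image (G.phi (Finset.Icc 1 G.nv)) = X := by
    intro X hX
    rw [hHI, Finset.inter_eq_left.2 hX]
    conv_rhs => rw [← Finset.image_id (s := X)]
    exact Finset.image_congr fun k hk => hphi k (hX hk)
  have hlam : (G.sub (Finset.Icc 1 G.nv)).lam = G.lam := by
    rw [sub_lam]
    have : Lf (Finset.Icc 1 G.nv) G.lam.length = List.range G.lam.length := by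
      unfold Lf
      rw [List.filter_eq_self]
      intro a ha
      simp [nv] at *
      omega
    rw [this]
    apply List.ext_getElem
    · simp
    · intro i h1 h2
      simp [h2]
  have hed : (G.sub (Finset.Icc 1 G.nv)).ed = G.ed := by
    have h1 : ∀ p ∈ G.ed, p.1 ∈ Finset.Icc 1 G.omega ∧ p.2 ∈ Finset.Icc 1 G.omega := fun p hp =>
      ⟨hG.2.1 (hG.2.2.2.1 p hp).1, hG.2.2.1 (hG.2.2.2.1 p hp).2.1⟩
    change (G.ed.filter _).image _ = _
    rw [Finset.filter_true_of_mem (fun p hp => ⟨v_mem G (h1 p hp).1, v_mem G (h1 p hp).2⟩)]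
    conv_rhs => rw [← Finset.image_id (s := G.ed)]
    apply Finset.image_congr
    intro p hp
    have := h1 p hp
    simp [hphi _ this.1, hphi _ this.2]
  have hup : (G.sub (Finset.Icc 1 G.nv)).up = G.up := hset _ hG.2.1
  have hdn : (G.sub (Finset.Icc 1 G.nv)).dn = G.dn := hset _ hG.2.2.1
  generalize G.sub (Finset.Icc 1 G.nv) = A at *
  cases A; cases G; simp_all

theorem eq_eps (G : BD) (hG : G.Valid) (h : G.lam = []) : G = eps := by
  have hw : G.omega = 0 := by simp [omega, h]
  have hup := hG.2.1
  have hdn := hG.2.2.1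
  have hed : G.ed = ∅ := by
    rw [Finset.eq_empty_iff_forall_notMem]
    intro p hp
    have := hup (hG.2.2.2.1 p hp).1
    simp [hw] at this
  rw [hw] at hup hdn
  cases G; simp_all [eps]

theorem sub_eq_eps (G : BD) (I : Finset ℕ) (hG : G.Valid) (hI : I ⊆ Finset.Icc 1 G.nv) :
    G.sub I = eps ↔ I = ∅ := by
  have hn := sub_nv G I hI
  constructor
  · intro h
    rw [h] at hn
    simpa [nv, eps] using hn.symm
  · rintro rfl
    apply eq_eps _ (sub_valid G _ hG hI)
    simpa [nv] using hn

theorem omega_zero (G : BD) (hG : G.Valid) (h : G.omega = 0) : G = eps := by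
  apply eq_eps G hG
  by_contra hne
  obtain ⟨x, hx⟩ := List.exists_mem_of_ne_nil _ hne
  have h1 := hG.1 x hx
  have := List.le_sum_of_mem hx
  unfold omega at h
  omega

theorem HI_add (G : BD) (I : Finset ℕ) :
    (G.HI I).card + (G.HI (Finset.Icc 1 G.nv \ I)).card = G.omega := by
  rw [← Finset.card_union_of_disjoint]
  · have : G.HI I ∪ G.HI (Finset.Icc 1 G.nv \ I) = Finset.Icc 1 G.omega := by
      ext k
      rw [Finset.mem_union, HI_iff, HI_iff, Finset.mem_sdiff]
      have := v_mem G (k := k)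
      tauto
    rw [this]; simp
  · rw [Finset.disjoint_left]
    intro a
    rw [HI_iff, HI_iff, Finset.mem_sdiff]
    tauto

theorem isolated_compl (G : BD) (I : Finset ℕ) (hG : G.Valid) (h : G.Isolated I) :
    G.Isolated (Finset.Icc 1 G.nv \ I) := by
  intro p hp
  have h1 := hG.2.2.2.1 p hp
  have := h p hp
  simp only [Finset.mem_sdiff, v_mem G (hG.2.1 h1.1), v_mem G (hG.2.2.1 h1.2.1), this]

open scoped Classical in
noncomputable def isos (G : BD) (K : Finset ℕ) : Finset (Finset ℕ) :=
  K.powerset.filter (fun I => G.Isolated I)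

theorem mem_isos (G : BD) (K I : Finset ℕ) : I ∈ G.isos K ↔ I ⊆ K ∧ G.Isolated I := by
  simp [isos]

theorem sum_sub {M : Type*} [AddCommMonoid M] (G : BD) (I : Finset ℕ) (hG : G.Valid)
    (hI : I ⊆ Finset.Icc 1 G.nv) (hIs : G.Isolated I) (F : BD → BD → M) :
    ∑ J ∈ (G.sub I).isos (Finset.Icc 1 (G.sub I).nv),
      F ((G.sub I).sub J) ((G.sub I).sub (Finset.Icc 1 (G.sub I).nv \ J)) =
    ∑ A ∈ G.isos I, F (G.sub A) (G.sub (I \ A)) := by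
  rw [sub_nv G I hI, ← rk_image]
  have hpi : ∀ A ⊆ I, pull I (A.image (rk I)) = A := by
    intro A hA
    ext x
    simp only [pull, Finset.mem_filter, Finset.mem_image]
    constructor
    · rintro ⟨h1, y, hy, h⟩
      rw [rk_inj I (hA hy) h1] at h
      exact h ▸ hy
    · exact fun h => ⟨hA h, x, h, rfl⟩
  refine Finset.sum_bij' (fun J _ => pull I J) (fun A _ => A.image (rk I)) ?_ ?_ ?_ ?_ ?_
  · intro J hJ
    rw [mem_isos] at hJ ⊢
    exact ⟨pull_subset _ _, (sub_isolated G I J hG hI hIs).1 hJ.2⟩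
  · intro A hA
    rw [mem_isos] at hA ⊢
    refine ⟨Finset.image_subset_image hA.1, ?_⟩
    rw [sub_isolated G I _ hG hI hIs, hpi A hA.1]
    exact hA.2
  · intro J hJ
    rw [mem_isos] at hJ
    ext x
    simp only [pull, Finset.mem_filter, Finset.mem_image]
    constructor
    · rintro ⟨y, ⟨h1, h2⟩, rfl⟩
      exact h2
    · intro hx
      obtain ⟨y, hy, rfl⟩ := Finset.mem_image.1 (hJ.1 hx)
      exact ⟨y, ⟨hy, hx⟩, rfl⟩
  · intro A hA
    rw [mem_isos] at hA
    exact hpi A hA.1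
  · intro J hJ
    rw [sub_sub G I J hG hI, sub_sub G I _ hG hI]
    congr 2
    ext x
    simp only [pull, Finset.mem_filter, Finset.mem_sdiff, Finset.mem_image]
    constructor
    · rintro ⟨h1, h2, h3⟩
      exact ⟨h1, fun h => h3 h.2⟩
    · rintro ⟨h1, h2⟩
      exact ⟨h1, ⟨x, h1, rfl⟩, fun h => h2 ⟨h1, h⟩⟩

theorem isolated_sdiff (G : BD) {I A : Finset ℕ} (h : G.Isolated I) (h' : G.Isolated A) :
    G.Isolated (I \ A) := by
  intro p hp
  simp only [Finset.mem_sdiff, h p hp, h' p hp]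

theorem isolated_union (G : BD) {I A : Finset ℕ} (h : G.Isolated I) (h' : G.Isolated A) :
    G.Isolated (I ∪ A) := by
  intro p hp
  simp only [Finset.mem_union, h p hp, h' p hp]

end BD

theorem liftB_single {V : Type*} [AddCommMonoid V] [Module ℂ V] (f : BDiagram → V) (A : BDiagram) :
    liftB f (Finsupp.single A 1) = f A := by
  simp [liftB]

theorem mkB_valid (G : BD) (h : G.Valid) : mkB G = Finsupp.single ⟨G, h⟩ 1 := by
  simp [mkB, h]

theorem deltaL_mkB (G : BD) (h : G.Valid) : deltaL (mkB G) =
    ∑ I ∈ G.isos (Finset.Icc 1 G.nv), mkB (G.sub I) ⊗ₜ[ℂ] mkB (G.sub (Finset.Icc 1 G.nv \ I)) := by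
  rw [mkB_valid G h, deltaL, liftB_single]
  rfl

theorem counitB_mkB (G : BD) (h : G.Valid) : counitB (mkB G) = if G = BD.eps then (1:ℂ) else 0 := by
  rw [mkB_valid G h, counitB, liftB_single]

theorem deltaL_sub (G : BD) (I : Finset ℕ) (hG : G.Valid) (hI : I ⊆ Finset.Icc 1 G.nv)
    (hIs : G.Isolated I) : deltaL (mkB (G.sub I)) =
    ∑ A ∈ G.isos I, mkB (G.sub A) ⊗ₜ[ℂ] mkB (G.sub (I \ A)) := by
  rw [deltaL_mkB _ (BD.sub_valid G I hG hI)]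
  exact BD.sum_sub G I hG hI hIs (fun X Y => mkB X ⊗ₜ[ℂ] mkB Y)

theorem BSpace_ext {V : Type*} [AddCommMonoid V] [Module ℂ V] (f g : BSpace →ₗ[ℂ] V)
    (h : ∀ G : BD, G.Valid → f (mkB G) = g (mkB G)) : f = g := by
  apply Finsupp.lhom_ext'
  rintro ⟨G, hG⟩
  ext
  simpa [mkB_valid G hG] using h G hG

theorem delta_comm (x : BSpace) : TensorProduct.comm ℂ BSpace BSpace (deltaL x) = deltaL x := by
  have : (TensorProduct.comm ℂ BSpace BSpace).toLinearMap ∘ₗ deltaL = deltaL := by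
    apply BSpace_ext
    intro G hG
    rw [LinearMap.comp_apply, deltaL_mkB G hG, map_sum]
    simp only [LinearEquiv.coe_coe, TensorProduct.comm_tmul]
    refine Finset.sum_bij' (fun I _ => Finset.Icc 1 G.nv \ I) (fun I _ => Finset.Icc 1 G.nv \ I)
      ?_ ?_ ?_ ?_ ?_
    · intro I hI
      rw [BD.mem_isos] at *
      exact ⟨Finset.sdiff_subset, BD.isolated_compl G I hG hI.2⟩
    · intro I hI
      rw [BD.mem_isos] at *
      exact ⟨Finset.sdiff_subset, BD.isolated_compl G I hG hI.2⟩
    · intro I hI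
      rw [BD.mem_isos] at hI
      exact Finset.sdiff_sdiff_eq_self hI.1
    · intro I hI
      rw [BD.mem_isos] at hI
      exact Finset.sdiff_sdiff_eq_self hI.1
    · intro I hI
      rw [BD.mem_isos] at hI
      rw [Finset.sdiff_sdiff_eq_self hI.1]
  exact LinearMap.congr_fun this x

theorem delta_lid : (TensorProduct.lid ℂ BSpace).toLinearMap ∘ₗ
        TensorProduct.map counitB LinearMap.id ∘ₗ deltaL = LinearMap.id := by
  apply BSpace_ext
  intro G hG
  rw [LinearMap.comp_apply, LinearMap.comp_apply, deltaL_mkB G hG, map_sum, map_sum]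
  simp only [LinearEquiv.coe_coe, TensorProduct.map_tmul, LinearMap.id_apply,
    TensorProduct.lid_tmul]
  rw [Finset.sum_eq_single ∅]
  · rw [counitB_mkB _ (BD.sub_valid G _ hG (by simp)),
      if_pos ((BD.sub_eq_eps G _ hG (by simp)).2 rfl), one_smul, Finset.sdiff_empty,
      BD.sub_full G hG]
  · intro I hI hne
    rw [BD.mem_isos] at hI
    rw [counitB_mkB _ (BD.sub_valid G _ hG hI.1),
      if_neg (fun h => hne ((BD.sub_eq_eps G _ hG hI.1).1 h)), zero_smul]
  · intro h
    exact absurd ((BD.mem_isos _ _ _).2 ⟨by simp, fun p _ => by simp⟩) h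

theorem delta_rid : (TensorProduct.rid ℂ BSpace).toLinearMap ∘ₗ
        TensorProduct.map LinearMap.id counitB ∘ₗ deltaL = LinearMap.id := by
  refine Eq.trans ?_ delta_lid
  apply LinearMap.ext
  intro x
  simp only [LinearMap.comp_apply, LinearEquiv.coe_coe]
  conv_rhs => rw [← delta_comm x]
  rw [TensorProduct.map_comm, TensorProduct.lid_comm]

theorem delta_assoc : (TensorProduct.assoc ℂ BSpace BSpace BSpace).toLinearMap ∘ₗ
        TensorProduct.map deltaL LinearMap.id ∘ₗ deltaL =
      TensorProduct.map LinearMap.id deltaL ∘ₗ deltaL := by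
  apply BSpace_ext
  intro G hG
  rw [LinearMap.comp_apply, LinearMap.comp_apply, LinearMap.comp_apply, deltaL_mkB G hG, map_sum,
    map_sum, map_sum]
  simp only [LinearEquiv.coe_coe, TensorProduct.map_tmul, LinearMap.id_apply]
  have h1 : ∀ I ∈ G.isos (Finset.Icc 1 G.nv),
      TensorProduct.assoc ℂ BSpace BSpace BSpace (deltaL (mkB (G.sub I)) ⊗ₜ[ℂ]
        mkB (G.sub (Finset.Icc 1 G.nv \ I))) =
      ∑ A ∈ G.isos I, mkB (G.sub A) ⊗ₜ[ℂ] (mkB (G.sub (I \ A)) ⊗ₜ[ℂ]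
        mkB (G.sub (Finset.Icc 1 G.nv \ I))) := by
    intro I hI
    rw [BD.mem_isos] at hI
    rw [deltaL_sub G I hG hI.1 hI.2, TensorProduct.sum_tmul, map_sum]
    simp only [TensorProduct.assoc_tmul]
  have h2 : ∀ I ∈ G.isos (Finset.Icc 1 G.nv),
      mkB (G.sub I) ⊗ₜ[ℂ] deltaL (mkB (G.sub (Finset.Icc 1 G.nv \ I))) =
      ∑ A ∈ G.isos (Finset.Icc 1 G.nv \ I), mkB (G.sub I) ⊗ₜ[ℂ] (mkB (G.sub A) ⊗ₜ[ℂ]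
        mkB (G.sub ((Finset.Icc 1 G.nv \ I) \ A))) := by
    intro I hI
    rw [BD.mem_isos] at hI
    rw [deltaL_sub G _ hG Finset.sdiff_subset (BD.isolated_compl G I hG hI.2),
      TensorProduct.tmul_sum]
  rw [Finset.sum_congr rfl h1, Finset.sum_congr rfl h2, Finset.sum_sigma', Finset.sum_sigma']
  refine Finset.sum_bij' (fun x _ => ⟨x.2, x.1 \ x.2⟩) (fun x _ => ⟨x.1 ∪ x.2, x.1⟩)
    ?_ ?_ ?_ ?_ ?_
  · rintro ⟨I, A⟩ h
    simp only [Finset.mem_sigma, BD.mem_isos] at h ⊢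
    exact ⟨⟨h.2.1.trans h.1.1, h.2.2⟩, Finset.sdiff_subset_sdiff h.1.1 le_rfl,
      BD.isolated_sdiff G h.1.2 h.2.2⟩
  · rintro ⟨I, A⟩ h
    simp only [Finset.mem_sigma, BD.mem_isos] at h ⊢
    exact ⟨⟨Finset.union_subset h.1.1 (h.2.1.trans Finset.sdiff_subset),
      BD.isolated_union G h.1.2 h.2.2⟩, Finset.subset_union_left, h.1.2⟩
  · rintro ⟨I, A⟩ h
    simp only [Finset.mem_sigma, BD.mem_isos] at h
    simp only [Finset.union_sdiff_of_subset h.2.1]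
  · rintro ⟨I, A⟩ h
    simp only [Finset.mem_sigma, BD.mem_isos] at h
    have : (I ∪ A) \ I = A := by
      rw [Finset.union_sdiff_left, Finset.sdiff_eq_self_iff_disjoint]
      exact (Finset.disjoint_of_subset_left h.2.1 Finset.sdiff_disjoint)
    simp only [this]
  · rintro ⟨I, A⟩ h
    simp only [Finset.mem_sigma, BD.mem_isos] at h
    simp only
    rw [sdiff_sdiff_left, Finset.sup_eq_union, Finset.union_sdiff_of_subset h.2.1]

/-- `(ℬ, Δ, ε*)` is a graded connected cocommutative coassociative
coalgebra. -/
theorem bspace_coalgebra :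
    ((TensorProduct.assoc ℂ BSpace BSpace BSpace).toLinearMap ∘ₗ
        TensorProduct.map deltaL LinearMap.id ∘ₗ deltaL =
      TensorProduct.map LinearMap.id deltaL ∘ₗ deltaL) ∧
    (∀ x : BSpace, TensorProduct.comm ℂ BSpace BSpace (deltaL x) = deltaL x) ∧
    ((TensorProduct.lid ℂ BSpace).toLinearMap ∘ₗ
        TensorProduct.map counitB LinearMap.id ∘ₗ deltaL = LinearMap.id) ∧
    ((TensorProduct.rid ℂ BSpace).toLinearMap ∘ₗ
        TensorProduct.map LinearMap.id counitB ∘ₗ deltaL = LinearMap.id) ∧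
    (∀ A : BDiagram, A.1.omega = 0 → A.1 = BD.eps) ∧
    (∀ A : BDiagram, ∀ I ⊆ Finset.Icc 1 A.1.nv, A.1.Isolated I →
      (A.1.sub I).omega + (A.1.sub (Finset.Icc 1 A.1.nv \ I)).omega = A.1.omega) := by
  refine ⟨delta_assoc, delta_comm, delta_lid, delta_rid,
    fun A h => BD.omega_zero A.1 A.2 h, fun A I _ _ => ?_⟩
  rw [BD.sub_omega, BD.sub_omega, BD.HI_add]
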